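/- Let M be the free metabelian group on the set {a₁,…,a_m} ∪ {t₁,…,t_k}, and let R'₂ = {[a_i, a_j] : 1 ≤ i,j ≤ m} ∪ {[a_i, a_j^{t_s}] : 1 ≤ i,j ≤ m, 1 ≤ s ≤ k} ⊆ M. Then for all 1 ≤ i,j ≤ m and every word u in the letters t₁^{±1},…,t_k^{±1} of length ℓ ≥ 1, the element [a_i, a_j^{u}] of M can be written in M as a product of at most 4ℓ − 3 conjugates of elements of R'₂ ∪ R'₂⁻¹. -/

import Mathlib

open Function

/-- The length of the reduced word representing an element of a free group. -/
noncomputable def freeNorm {X : Type*} (w : FreeGroup X) : ℕ :=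
  letI := Classical.decEq X
  w.toWord.length

/-- `w` equals a product of exactly `N` conjugates of elements of `R ∪ R⁻¹`. -/
def AreaIs {G : Type*} [Group G] (R : Set G) (w : G) (N : ℕ) : Prop :=
  ∃ r f : Fin N → G, (∀ i, r i ∈ R ∨ (r i)⁻¹ ∈ R) ∧
    w = (List.ofFn fun i => (f i)⁻¹ * r i * f i).prod

/-- The area of `w` with respect to the relators `R` is at most `N`. -/
def AreaLe {G : Type*} [Group G] (R : Set G) (w : G) (N : ℕ) : Prop :=
  ∃ N' ≤ N, AreaIs R w N'

/-- `f ≼ g` : there is `C > 0` with `f n ≤ C * g (C * n) + C * n + C` for all `n`. -/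
def Dominates (f g : ℕ → ℕ) : Prop :=
  ∃ C : ℕ, 0 < C ∧ ∀ n, f n ≤ C * g (C * n) + C * n + C

/-- `f ≈ g` : mutual domination. -/
def DehnEquiv (f g : ℕ → ℕ) : Prop := Dominates f g ∧ Dominates g f

/-- `δ` is the Dehn function of the presentation with relator set `R`. -/
def IsDehnFunctionOf {X : Type*} (R : Set (FreeGroup X)) (δ : ℕ → ℕ) : Prop :=
  ∀ n, IsLeast {N | ∀ w ∈ Subgroup.normalClosure R, freeNorm w ≤ n → AreaLe R w N} (δ n)

/-- A group is metabelian if its derived subgroup is abelian. -/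
def IsMetabelian (G : Type*) [Group G] : Prop :=
  ∀ a b : G, a ∈ commutator G → b ∈ commutator G → a * b = b * a

instance derivedSeriesNormalInst {G : Type*} [Group G] (n : ℕ) : (derivedSeries G n).Normal :=
  derivedSeries_normal G n

/-- The free metabelian group on `X`: the free group modulo its second derived subgroup. -/
abbrev FreeMetabelian (X : Type*) := FreeGroup X ⧸ derivedSeries (FreeGroup X) 2

/-- The word length of `w` in the free metabelian group is at most `n`. -/
def mNormLe {X : Type*} (w : FreeMetabelian X) (n : ℕ) : Prop :=
  ∃ v : FreeGroup X, QuotientGroup.mk' (derivedSeries (FreeGroup X) 2) v = w ∧ freeNorm v ≤ n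

/-- `δ` is the relative Dehn function (in the variety of metabelian groups) of the
relative presentation with relator set `R`. -/
def IsRelDehnFunctionOf {X : Type*} (R : Set (FreeMetabelian X)) (δ : ℕ → ℕ) : Prop :=
  ∀ n, IsLeast {N | ∀ w ∈ Subgroup.normalClosure R, mNormLe w n → AreaLe R w N} (δ n)

/-- The paper's commutator convention: `[x, y] = x⁻¹ * y⁻¹ * x * y`. -/
def pcomm {G : Type*} [Group G] (x y : G) : G := x⁻¹ * y⁻¹ * x * y

/-- A group has torsion-free rank `k` if it has a finite-index subgroup isomorphic to `ℤ^k`. -/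
def HasTFRank (Q : Type*) [Group Q] (k : ℕ) : Prop :=
  ∃ H : Subgroup Q, H.index ≠ 0 ∧ Nonempty (H ≃* Multiplicative (Fin k → ℤ))

/-- `G ⧸ A` is abelian and has torsion-free rank `j`. -/
def QuotientRankProp {G : Type*} [Group G] (A : Subgroup G) [A.Normal] (j : ℕ) : Prop :=
  (∀ x y : G ⧸ A, x * y = y * x) ∧ HasTFRank (G ⧸ A) j

/-- The set of torsion-free ranks of quotients `G ⧸ A` by abelian normal subgroups `A`
with `G ⧸ A` abelian. -/
def abelianRankSet (G : Type*) [Group G] : Set ℕ :=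
  {j | ∃ A : Subgroup G, ∃ h : A.Normal, (∀ x y : G, x ∈ A → y ∈ A → x * y = y * x) ∧
    @QuotientRankProp G _ A h j}

/-- Generator `aᵢ` of the free metabelian group on `{a₁,…,a_m} ∪ {t₁,…,t_k}`. -/
noncomputable def ma {m k : ℕ} (i : Fin m) : FreeMetabelian (Fin m ⊕ Fin k) :=
  QuotientGroup.mk' (derivedSeries (FreeGroup (Fin m ⊕ Fin k)) 2) (FreeGroup.of (Sum.inl i))

/-- Generator `tₛ` of the free metabelian group on `{a₁,…,a_m} ∪ {t₁,…,t_k}`. -/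
noncomputable def mgt {m k : ℕ} (s : Fin k) : FreeMetabelian (Fin m ⊕ Fin k) :=
  QuotientGroup.mk' (derivedSeries (FreeGroup (Fin m ⊕ Fin k)) 2) (FreeGroup.of (Sum.inr s))

/-- The image in the free metabelian group of a word `u` in the letters `t₁^{±1},…,t_k^{±1}`. -/
noncomputable def tword {m k : ℕ} (u : FreeGroup (Fin k)) : FreeMetabelian (Fin m ⊕ Fin k) :=
  FreeGroup.lift (fun s => (mgt s : FreeMetabelian (Fin m ⊕ Fin k))) u

/-- The relator set `R'₂ = {[aᵢ,aⱼ]} ∪ {[aᵢ,aⱼ^{tₛ}]}`. -/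
noncomputable def R2' (m k : ℕ) : Set (FreeMetabelian (Fin m ⊕ Fin k)) :=
  {w | (∃ i j : Fin m, w = pcomm (ma i) (ma j)) ∨
       (∃ (i j : Fin m) (s : Fin k), w = pcomm (ma i) ((mgt s)⁻¹ * ma j * mgt s))}

theorem AreaLe.mono' {G : Type*} [Group G] {R : Set G} {w : G} {N M : ℕ} (h : AreaLe R w N)
    (hNM : N ≤ M) : AreaLe R w M := by
  obtain ⟨n, hn, h⟩ := h
  exact ⟨n, hn.trans hNM, h⟩

theorem AreaLe.of_mem' {G : Type*} [Group G] {R : Set G} {w : G} (h : w ∈ R) :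
    AreaLe R w 1 :=
  ⟨1, le_rfl, fun _ => w, fun _ => 1, fun _ => Or.inl h, by simp⟩

theorem AreaLe.mul' {G : Type*} [Group G] {R : Set G} {v w : G} {N M : ℕ} (hv : AreaLe R v N)
    (hw : AreaLe R w M) : AreaLe R (v * w) (N + M) := by
  obtain ⟨n, hn, r, f, hr, rfl⟩ := hv
  obtain ⟨n', hn', r', f', hr', rfl⟩ := hw
  refine ⟨n + n', by omega, Fin.append r r', Fin.append f f', ?_, ?_⟩
  · intro i
    refine Fin.addCases (fun i => ?_) (fun i => ?_) i
    · simpa using hr i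
    · simpa using hr' i
  · rw [← List.prod_append, ← List.ofFn_fin_append]
    congr 2
    funext i
    refine Fin.addCases (fun i => ?_) (fun i => ?_) i <;> simp

theorem AreaLe.conj' {G : Type*} [Group G] {R : Set G} {w : G} {N : ℕ} (h : AreaLe R w N)
    (g : G) : AreaLe R (g⁻¹ * w * g) N := by
  obtain ⟨n, hn, r, f, hr, rfl⟩ := h
  refine ⟨n, hn, r, fun i => f i * g, hr, ?_⟩
  have := map_list_prod (MulAut.conj g⁻¹) (List.ofFn fun i => (f i)⁻¹ * r i * f i)
  simp only [MulAut.conj_apply, inv_inv, List.map_ofFn] at this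
  rw [this]
  congr 2
  funext i
  simp [mul_assoc]

theorem AreaLe.inv_one' {G : Type*} [Group G] {R : Set G} {w : G} (h : AreaLe R w 1) :
    AreaLe R w⁻¹ 1 := by
  obtain ⟨n, hn, r, f, hr, rfl⟩ := h
  interval_cases n
  · exact ⟨0, by omega, r, f, hr, by simp⟩
  · exact ⟨1, le_rfl, fun i => (r i)⁻¹, f, fun i => by simpa using (hr i).symm,
      by simp [mul_assoc]⟩

theorem step_area {G : Type*} [Group G] {R : Set G} {ι : Type*} (A : ι → G)
    (hmet : ∀ x y z w : G, Commute (pcomm x y) (pcomm z w))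
    (h0 : ∀ i j, AreaLe R (pcomm (A i) (A j)) 1) (s : G)
    (hs : ∀ i j, AreaLe R (pcomm (A i) (s⁻¹ * A j * s)) 1) (v : G) (N : ℕ)
    (hv : ∀ i j, AreaLe R (pcomm (A i) (v⁻¹ * A j * v)) N) (i j : ι) :
    AreaLe R (pcomm (A i) ((v * s)⁻¹ * A j * (v * s))) (N + 2) := by
  have hc := hmet s (A i) (A j) (v * s)
  have h1 := ((hv i j).conj' s).conj' (pcomm s (A i))
  have h2 := (((hs j i).conj' (s⁻¹ * (A i)⁻¹ * s)).conj' (A i)).mul' (h0 i j)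
  have h3 := h2.conj' (pcomm (A j) (v * s))
  have h4 := h1.mul' h3
  convert h4 using 1
  have e1 : pcomm (A i) ((v * s)⁻¹ * A j * (v * s)) =
      ((pcomm s (A i))⁻¹ * (s⁻¹ * pcomm (A i) (v⁻¹ * A j * v) * s) * pcomm s (A i)) *
      pcomm (pcomm s (A i)) (A j * pcomm (A j) (v * s)) := by
    simp only [pcomm]; group
  have e2 : ∀ c b d : G, Commute c d → pcomm c (b * d) = d⁻¹ * pcomm c b * d := by
    intro c b d h
    simp only [pcomm, mul_inv_rev]
    calc c⁻¹ * (d⁻¹ * b⁻¹) * c * (b * d) = (c⁻¹ * d⁻¹) * b⁻¹ * c * b * d := by group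
      _ = (d⁻¹ * c⁻¹) * b⁻¹ * c * b * d := by rw [(h.inv_inv).eq]
      _ = _ := by group
  rw [e1, e2 _ _ _ hc]
  congr 3
  simp only [pcomm]; group

theorem freeMetabelian_comm {X : Type*} (x y z w : FreeMetabelian X) :
    Commute (pcomm x y) (pcomm z w) := by
  induction x using QuotientGroup.induction_on with | _ x
  induction y using QuotientGroup.induction_on with | _ y
  induction z using QuotientGroup.induction_on with | _ z
  induction w using QuotientGroup.induction_on with | _ w
  have key : ∀ p q : FreeGroup X, pcomm p q ∈ derivedSeries (FreeGroup X) 1 := by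
    intro p q
    have := Subgroup.commutator_mem_commutator (Subgroup.mem_top p⁻¹) (Subgroup.mem_top q⁻¹)
    rw [derivedSeries_succ, derivedSeries_zero]
    simpa [commutatorElement_def, pcomm] using this
  have h2 := Subgroup.commutator_mem_commutator
    ((derivedSeries (FreeGroup X) 1).inv_mem (key x y))
    ((derivedSeries (FreeGroup X) 1).inv_mem (key z w))
  have h3 : ((pcomm z w * pcomm x y : FreeGroup X) : FreeMetabelian X)
      = ((pcomm x y * pcomm z w : FreeGroup X) : FreeMetabelian X) := by
    rw [QuotientGroup.eq]
    rw [derivedSeries_succ]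
    convert h2 using 1
    rw [commutatorElement_def]
    group
  exact h3.symm

theorem base_area (m k : ℕ) (x : Fin k × Bool) (i j : Fin m) :
    AreaLe (R2' m k) (pcomm (ma i) ((tword (FreeGroup.mk [x]))⁻¹ * ma j *
      tword (FreeGroup.mk [x]))) 1 := by
  obtain ⟨s, b⟩ := x
  have hp : ∀ i j : Fin m, AreaLe (R2' m k) (pcomm (ma i) ((mgt s)⁻¹ * ma j * mgt s)) 1 :=
    fun i j => AreaLe.of_mem' (Or.inr ⟨i, j, s, rfl⟩)
  cases b
  · have e : (tword (FreeGroup.mk [(s, false)]) : FreeMetabelian (Fin m ⊕ Fin k)) = (mgt s)⁻¹ := by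
      simp [tword]
    rw [e]
    convert ((hp j i).inv_one'.conj' (mgt s)⁻¹) using 1
    simp only [pcomm]; group
  · have e : (tword (FreeGroup.mk [(s, true)]) : FreeMetabelian (Fin m ⊕ Fin k)) = mgt s := by
      simp [tword]
    rw [e]
    exact hp i j

theorem list_area (m k : ℕ) (L : List (Fin k × Bool)) (hL : L ≠ []) : ∀ i j : Fin m,
    AreaLe (R2' m k) (pcomm (ma i) ((tword (FreeGroup.mk L))⁻¹ * ma j *
      tword (FreeGroup.mk L))) (2 * L.length - 1) := by
  induction L using List.reverseRecOn with
  | nil => exact absurd rfl hL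
  | append_singleton L x ih =>
    intro i j
    by_cases h : L = []
    · subst h
      exact base_area m k x i j
    · have e : (tword (FreeGroup.mk (L ++ [x])) : FreeMetabelian (Fin m ⊕ Fin k)) =
          tword (FreeGroup.mk L) * tword (FreeGroup.mk [x]) := by
        rw [← FreeGroup.mul_mk]; exact map_mul _ _ _
      rw [e]
      have hl : 0 < L.length := List.length_pos_iff.mpr h
      refine (step_area ma freeMetabelian_comm
        (fun i j => AreaLe.of_mem' (Or.inl ⟨i, j, rfl⟩)) _ (base_area m k x) _ _
        (ih h) i j).mono' ?_
      simp only [List.length_append, List.length_singleton]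
      omega

/-- In the free metabelian group, `[aᵢ, aⱼ^u]` is a product of at most
`4ℓ - 3` conjugates of elements of `R'₂ ∪ R'₂⁻¹`, where `ℓ` is the length of `u`. -/
theorem relative_commutation_cost (m k : ℕ) (i j : Fin m)
    (u : FreeGroup (Fin k)) (ℓ : ℕ) (hℓ : 1 ≤ ℓ) (hu : freeNorm u = ℓ) :
    AreaLe (R2' m k) (pcomm (ma i) ((tword u)⁻¹ * ma j * tword u)) (4 * ℓ - 3) := by
  letI := Classical.decEq (Fin k)
  have hlen : u.toWord.length = ℓ := by
    rw [← hu]; rfl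
  have hne : u.toWord ≠ [] := by
    intro h
    rw [h] at hlen
    simp at hlen
    omega
  have := list_area m k u.toWord hne i j
  rw [FreeGroup.mk_toWord] at this
  exact this.mono' (by omega)
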